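/- Let f be an almost embedding of K₄ in the plane. Then wu_cyc(p₁₂, p₂₃, p₃₁) + wu_tri(p₄₁, p₄₂, p₄₃) = 2·w_f(123, 4), where wu_cyc(p₁₂, p₂₃, p₃₁) := 2·(w'(p₂₃, f₁) + w'(p₁₂, f₃) + w'(p₃₁, f₂)) is the cyclic Wu number, wu_tri(p₄₁, p₄₂, p₄₃) := 2·(w'(p̄₄₂p₄₃, f₁) + w'(p̄₄₁p₄₂, f₃) + w'(p̄₄₃p₄₁, f₂)) is the triodic Wu number (p̄ denoting the reverse of p and juxtaposition denoting concatenation), and w_f(123, 4) := w'(p₁₂, f₄) + w'(p₂₃, f₄) + w'(p₃₁, f₄). -/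

import Mathlib

/-- Sum of the oriented angles ∠A₁OA₂ + ∠A₂OA₃ + ⋯ + ∠A_{m−1}OA_m at `O`
along a polygonal line given as a list of points in the plane `ℂ`,
where ∠AOB := Complex.arg ((B − O)/(A − O)) ∈ (−π, π]. -/
noncomputable def angSum (O : ℂ) : List ℂ → ℝ
  | a :: b :: rest => Complex.arg ((b - O) / (a - O)) + angSum O (b :: rest)
  | _ => 0

/-- `w'(A₁…A_m, O)`: the (non-closed) winding number of a polygonal line around `O`,
i.e. `(∠A₁OA₂ + ⋯ + ∠A_{m−1}OA_m) / (2π)`. -/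
noncomputable def wp (O : ℂ) (l : List ℂ) : ℝ := angSum O l / (2 * Real.pi)

/-- `w(A₁…A_m, O)`: the winding number of the closed polygonal line `A₁…A_m` around `O`,
i.e. `(∠A₁OA₂ + ⋯ + ∠A_{m−1}OA_m + ∠A_mOA₁) / (2π)`. -/
noncomputable def wcl (O : ℂ) (l : List ℂ) : ℝ := wp O (l ++ [l.headI])

/-- The image of a polygonal line: the union of the segments between consecutive points. -/
def imagePL : List ℂ → Set ℂ
  | [] => ∅
  | [a] => {a}
  | a :: b :: rest => segment ℝ a b ∪ imagePL (b :: rest)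

/-! The identity is a reciprocity law for winding numbers. If a polygonal line `p` from `a` to `b`
is disjoint from a polygonal line `q` from `c` to `d`, then
`w'(q, a) − w'(q, b) = w'(p, c) − w'(p, d)`. For two disjoint segments, all differences `y − x`
of a point `y` of one and a point `x` of the other lie in an open half-plane, where the argument has
a continuous branch `θ`; both sides are then the same alternating sum of values of `θ`. The law is
additive under concatenation in `p` and in `q`, hence holds for polygonal lines. Since reversing a
line that avoids `O` negates its winding number around `O`, the sum of the law over the three pairs
of opposite edges of `K₄` is the identity. -/

lemma isCompact_segment {E : Type*} [AddCommGroup E] [Module ℝ E] [TopologicalSpace E]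
    [ContinuousAdd E] [ContinuousSMul ℝ E] (a b : E) : IsCompact (segment ℝ a b) := by
  rw [segment_eq_image]
  exact isCompact_Icc.image (by fun_prop)

lemma arg_div_of_re_pos {z w : ℂ} (hz : 0 < z.re) (hw : 0 < w.re) :
    (z / w).arg = z.arg - w.arg := by
  have hz₀ : z ≠ 0 := by rintro rfl; simp at hz
  have hw₀ : w ≠ 0 := by rintro rfl; simp at hw
  have hz' := abs_lt.1 (Complex.abs_arg_lt_pi_div_two_iff.2 (Or.inl hz))
  have hw' := abs_lt.1 (Complex.abs_arg_lt_pi_div_two_iff.2 (Or.inl hw))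
  have hinv : w⁻¹.arg = -w.arg := by
    rw [Complex.arg_inv, if_neg (by linarith [Real.pi_pos])]
  have hmem : z.arg + w⁻¹.arg ∈ Set.Ioc (-Real.pi) Real.pi := by
    rw [hinv]
    constructor <;> linarith
  rw [div_eq_mul_inv, Complex.arg_mul hz₀ (inv_ne_zero hw₀) hmem, hinv, sub_eq_add_neg]

section Separation

variable {s t : Set ℂ}

lemma exists_forall_re_sub_mul_pos (hs : Convex ℝ s) (hs' : IsCompact s) (ht : Convex ℝ t)
    (ht' : IsClosed t) (hst : Disjoint s t) :
    ∃ u : ℂ, ∀ x ∈ s, ∀ y ∈ t, 0 < ((y - x) * u).re := by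
  obtain ⟨g, m, n, hgs, hmn, hgt⟩ := geometric_hahn_banach_compact_closed hs hs' ht ht' hst
  have hg (z : ℂ) : g z = (z * starRingEnd ℂ ((InnerProductSpace.toDual ℝ ℂ).symm g)).re := by
    rw [← Complex.inner, InnerProductSpace.toDual_symm_apply]
  refine ⟨starRingEnd ℂ ((InnerProductSpace.toDual ℝ ℂ).symm g), fun x hx y hy ↦ ?_⟩
  rw [← hg, map_sub, sub_pos]
  exact (hgs x hx).trans (hmn.trans (hgt y hy))

lemma exists_forall_arg_div_eq_sub (hs : Convex ℝ s) (hs' : IsCompact s) (ht : Convex ℝ t)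
    (ht' : IsClosed t) (hst : Disjoint s t) :
    ∃ θ : ℂ → ℝ, ∀ x ∈ s, ∀ x' ∈ s, ∀ y ∈ t, ∀ y' ∈ t,
      ((y - x) / (y' - x')).arg = θ (y - x) - θ (y' - x') := by
  obtain ⟨u, hu⟩ := exists_forall_re_sub_mul_pos hs hs' ht ht' hst
  refine ⟨fun z ↦ (z * u).arg, fun x hx x' hx' y hy y' hy' ↦ ?_⟩
  have hu₀ : u ≠ 0 := by rintro rfl; simpa using hu x hx y hy
  rw [← mul_div_mul_right _ _ hu₀, arg_div_of_re_pos (hu x hx y hy) (hu x' hx' y' hy')]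

end Separation

section AngSum

variable {O a b c d : ℂ} {l m : List ℂ}

lemma angSum_pair (O a b : ℂ) : angSum O [a, b] = ((b - O) / (a - O)).arg := by
  simp only [angSum, add_zero]

lemma angSum_cons_cons (O a b : ℂ) (l : List ℂ) :
    angSum O (a :: b :: l) = angSum O [a, b] + angSum O (b :: l) := by
  rw [angSum_pair, angSum]

lemma angSum_pair_self (O a : ℂ) : angSum O [a, a] = 0 := by
  rw [angSum_pair, Complex.arg_div_self]

lemma angSum_pair_swap (hO : O ∉ segment ℝ a b) : angSum O [b, a] = -angSum O [a, b] := by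
  obtain ⟨θ, hθ⟩ := exists_forall_arg_div_eq_sub (convex_singleton O) isCompact_singleton
    (convex_segment a b) (isCompact_segment a b).isClosed (Set.disjoint_singleton_left.2 hO)
  have ha := left_mem_segment ℝ a b
  have hb := right_mem_segment ℝ a b
  rw [angSum_pair, angSum_pair, hθ O rfl O rfl a ha b hb, hθ O rfl O rfl b hb a ha, neg_sub]

lemma angSum_append_cons (O b : ℂ) (m : List ℂ) : ∀ l : List ℂ,
    angSum O (l ++ b :: m) = angSum O (l ++ [b]) + angSum O (b :: m)
  | [] => by simp [angSum]
  | [x] => angSum_cons_cons O x b m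
  | x :: y :: l => by
    have ih := angSum_append_cons O b m (y :: l)
    simp only [List.cons_append] at ih ⊢
    rw [angSum_cons_cons, ih, angSum_cons_cons O x y (l ++ [b]), add_assoc]

lemma angSum_append (O : ℂ) (h : l.getLast? = m.head?) :
    angSum O (l ++ m) = angSum O l + angSum O m := by
  obtain rfl | ⟨l, b, rfl⟩ := l.eq_nil_or_concat'
  · simp [angSum]
  · obtain ⟨m, rfl⟩ : ∃ m', m = b :: m' := List.head?_eq_some_iff.1 (by simpa using h.symm)
    rw [List.append_assoc, List.singleton_append, angSum_append_cons, angSum_cons_cons,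
      angSum_pair_self, zero_add]

lemma angSum_reverse : ∀ {l : List ℂ}, O ∉ imagePL l → angSum O l.reverse = -angSum O l
  | [], _ => by simp [angSum]
  | [x], _ => by simp [angSum]
  | x :: y :: l, hO => by
    obtain ⟨hxy, hl⟩ := not_or.1 hO
    calc angSum O (x :: y :: l).reverse
      _ = angSum O (l.reverse ++ y :: [x]) := by simp
      _ = angSum O (y :: l).reverse + angSum O [y, x] := by
        rw [angSum_append_cons, List.reverse_cons]
      _ = -angSum O (x :: y :: l) := by
        rw [angSum_reverse hl, angSum_pair_swap hxy, angSum_cons_cons O x y l, neg_add_rev]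

lemma angSum_pair_sub_angSum_pair (h : Disjoint (segment ℝ a b) (segment ℝ c d)) :
    angSum a [c, d] - angSum b [c, d] = angSum c [a, b] - angSum d [a, b] := by
  obtain ⟨θ, hθ⟩ := exists_forall_arg_div_eq_sub (convex_segment a b) (isCompact_segment a b)
    (convex_segment c d) (isCompact_segment c d).isClosed h
  have ha := left_mem_segment ℝ a b
  have hb := right_mem_segment ℝ a b
  have hc := left_mem_segment ℝ c d
  have hd := right_mem_segment ℝ c d
  have angSum_pair_neg (y) : angSum y [a, b] = ((y - b) / (y - a)).arg := by
    rw [angSum_pair, ← neg_sub y b, ← neg_sub y a, neg_div_neg_eq]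
  rw [angSum_pair, angSum_pair, angSum_pair_neg, angSum_pair_neg, hθ a ha a ha d hd c hc,
    hθ b hb b hb d hd c hc, hθ b hb a ha c hc c hc, hθ b hb a ha d hd d hd]
  ring

end AngSum

/-- `Joins p a b` says that the polygonal line `p` joins `a` to `b`: it is nonempty, starts at `a`
and ends at `b`. The inductive form provides induction on the number of segments. -/
inductive Joins : List ℂ → ℂ → ℂ → Prop
  | singleton (a : ℂ) : Joins [a] a a
  | cons (a : ℂ) {b c : ℂ} {l : List ℂ} (h : Joins (b :: l) b c) : Joins (a :: b :: l) a c

lemma joins_headI_getLast : ∀ {p : List ℂ} (hp : p ≠ []), Joins p p.headI (p.getLast hp)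
  | [a], _ => .singleton a
  | a :: b :: l, _ => .cons a (joins_headI_getLast (List.cons_ne_nil b l))

namespace Joins

variable {p q : List ℂ} {a b c d : ℂ}

lemma head?_eq (h : Joins p a b) : p.head? = some a := by
  cases h <;> rfl

lemma angSum_sub_angSum_of_disjoint_segment (hq : Joins q c d)
    (h : Disjoint (segment ℝ a b) (imagePL q)) :
    angSum a q - angSum b q = angSum c [a, b] - angSum d [a, b] := by
  induction hq with
  | singleton c => simp only [angSum, sub_self]
  | cons c _ ih =>
    obtain ⟨hseg, htail⟩ := Set.disjoint_union_right.1 h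
    rw [angSum_cons_cons a, angSum_cons_cons b]
    linear_combination angSum_pair_sub_angSum_pair hseg + ih htail

theorem angSum_sub_angSum (hp : Joins p a b) (hq : Joins q c d)
    (h : Disjoint (imagePL p) (imagePL q)) :
    angSum a q - angSum b q = angSum c p - angSum d p := by
  induction hp with
  | singleton a => simp only [angSum, sub_self]
  | cons a _ ih =>
    obtain ⟨hseg, htail⟩ := Set.disjoint_union_left.1 h
    rw [angSum_cons_cons c, angSum_cons_cons d]
    linear_combination hq.angSum_sub_angSum_of_disjoint_segment hseg + ih htail

theorem wp_sub_wp (hp : Joins p a b) (hq : Joins q c d)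
    (h : Disjoint (imagePL p) (imagePL q)) :
    wp a q - wp b q = wp c p - wp d p := by
  simp only [wp, ← sub_div, hp.angSum_sub_angSum hq h]

end Joins

lemma wp_reverse_append {O : ℂ} {p q : List ℂ} (h : p.head? = q.head?) (hO : O ∉ imagePL p) :
    wp O (p.reverse ++ q) = wp O q - wp O p := by
  rw [wp, angSum_append O (by rw [List.getLast?_reverse, h]), angSum_reverse hO, wp, wp]
  ring

/-- Let `f` be an almost embedding of `K₄` in the plane (four pairwise
distinct points `f 0, f 1, f 2, f 3`, a polygonal line `p i j` joining `f i` to `f j`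
for each edge `{i,j}` with `p j i` the reverse of `p i j`, images of non-adjacent edges
disjoint, and `f l` not on the image of any edge `{i,j}` with `l ∉ {i,j}`). Then
`wu_cyc(p₁₂, p₂₃, p₃₁) + wu_tri(p₄₁, p₄₂, p₄₃) = 2·w_f(123, 4)`, where
`wu_cyc(p₁₂, p₂₃, p₃₁) := 2·(w'(p₂₃, f₁) + w'(p₁₂, f₃) + w'(p₃₁, f₂))`,
`wu_tri(p₄₁, p₄₂, p₄₃) := 2·(w'(p̄₄₂p₄₃, f₁) + w'(p̄₄₁p₄₂, f₃) + w'(p̄₄₃p₄₁, f₂))`,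
and `w_f(123, 4) := w'(p₁₂, f₄) + w'(p₂₃, f₄) + w'(p₃₁, f₄)`
(vertices `1,2,3,4` are encoded as `0,1,2,3 : Fin 4`). -/
theorem cyclic_add_triodic_wu_eq_two_winding_K4 (f : Fin 4 → ℂ)
    (p : Fin 4 → Fin 4 → List ℂ)
    (hinj : Function.Injective f)
    (hne : ∀ i j, i ≠ j → p i j ≠ [])
    (hjoin : ∀ i j, ∀ h : i ≠ j,
      (p i j).headI = f i ∧ (p i j).getLast (hne i j h) = f j)
    (hsym : ∀ i j, p j i = (p i j).reverse)
    (hdisj : ∀ i j k l : Fin 4, i ≠ j → k ≠ l → i ≠ k → i ≠ l → j ≠ k → j ≠ l →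
      Disjoint (imagePL (p i j)) (imagePL (p k l)))
    (hvert : ∀ i j l : Fin 4, i ≠ j → l ≠ i → l ≠ j → f l ∉ imagePL (p i j)) :
    2 * (wp (f 0) (p 1 2) + wp (f 2) (p 0 1) + wp (f 1) (p 2 0)) +
      2 * (wp (f 0) ((p 3 1).reverse ++ p 3 2) + wp (f 2) ((p 3 0).reverse ++ p 3 1) +
        wp (f 1) ((p 3 2).reverse ++ p 3 0)) =
      2 * (wp (f 3) (p 0 1) + wp (f 3) (p 1 2) + wp (f 3) (p 2 0)) := by
  have edge {i j : Fin 4} (hij : i ≠ j) : Joins (p i j) (f i) (f j) := by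
    rw [← (hjoin i j hij).1, ← (hjoin i j hij).2]
    exact joins_headI_getLast (hne i j hij)
  have opposite_edges (i j k : Fin 4) (h : [i, j, 3, k].Nodup) :
      wp (f i) (p 3 k) - wp (f j) (p 3 k) = wp (f 3) (p i j) - wp (f k) (p i j) := by
    obtain ⟨⟨hij, hi3, hik⟩, ⟨hj3, hjk⟩, h3k⟩ :
        (i ≠ j ∧ i ≠ 3 ∧ i ≠ k) ∧ (j ≠ 3 ∧ j ≠ k) ∧ 3 ≠ k := by simpa using h
    exact (edge hij).wp_sub_wp (edge h3k) (hdisj i j 3 k hij h3k hi3 hik hj3 hjk)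
  have reverse_append (i j k : Fin 4) (h3j : 3 ≠ j) (h3k : 3 ≠ k) (hi3 : i ≠ 3) (hij : i ≠ j) :
      wp (f i) ((p 3 j).reverse ++ p 3 k) = wp (f i) (p 3 k) - wp (f i) (p 3 j) :=
    wp_reverse_append ((edge h3j).head?_eq.trans (edge h3k).head?_eq.symm)
      (hvert 3 j i h3j hi3 hij)
  rw [reverse_append 0 1 2 (by decide) (by decide) (by decide) (by decide),
    reverse_append 2 0 1 (by decide) (by decide) (by decide) (by decide),
    reverse_append 1 2 0 (by decide) (by decide) (by decide) (by decide)]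
  linear_combination 2 * (opposite_edges 0 1 2 (by decide) + opposite_edges 1 2 0 (by decide) +
    opposite_edges 2 0 1 (by decide))
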